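/- For real parameters θ¹, θ² with θ¹+θ² > 0 and θ¹−θ² > 0, the variance of the beta-logistic distribution is ∫_{ℝ} (x − μ)² · p(x;θ¹,θ²) dx = (1/4)·(ψ'((θ¹+θ²)/2) + ψ'((θ¹−θ²)/2)), where μ = (1/2)·(ψ((θ¹+θ²)/2) − ψ((θ¹−θ²)/2)). This is the (2,2) entry g₂₂ of the Fisher information matrix of the family. -/

import Mathlib

/-!
Substituting `y = 1 / (1 + e⁻²ˣ)` in the beta integral shows that the measure `sech(x)ˢ dx` has
moment generating function `t ↦ 2ˢ⁻¹ B((s + t) / 2, (s - t) / 2)` for `|t| < s`. The beta-logistic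
law is the exponential tilt of this measure by `θ²x`, so its mean and variance are the first two
derivatives at `θ²` of the logarithm of that function, which is built from values of `log Γ`.
-/

open MeasureTheory

/-- The hyperbolic secant function: `sech x = 2 / (eˣ + e⁻ˣ)`. -/
noncomputable def sech (x : ℝ) : ℝ := 1 / Real.cosh x

/-- The beta-logistic density. -/
noncomputable def betaLogisticPDF (θ1 θ2 x : ℝ) : ℝ :=
  (2 : ℝ) ^ (1 - θ1) * sech x ^ θ1 * Real.exp (θ2 * x) /
    (Real.Gamma ((θ1 - θ2) / 2) * Real.Gamma ((θ1 + θ2) / 2) / Real.Gamma θ1)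

/-- The digamma function `ψ(z) = d/dz log Γ(z)`. -/
noncomputable def digamma (z : ℝ) : ℝ := deriv (fun x => Real.log (Real.Gamma x)) z

/-- The trigamma function `ψ'(z) = d²/dz² log Γ(z)`. -/
noncomputable def trigamma (z : ℝ) : ℝ := iteratedDeriv 2 (fun x => Real.log (Real.Gamma x)) z

open ProbabilityTheory Set

section Digamma

variable {x : ℝ}

lemma analyticAt_complexGamma {z : ℂ} (hz : ∀ m : ℕ, z ≠ -m) : AnalyticAt ℂ Complex.Gamma z := by
  simpa only [Pi.inv_def, inv_inv] using (Complex.differentiable_one_div_Gamma.analyticAt z).inv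
    (inv_ne_zero (Complex.Gamma_ne_zero hz))

lemma analyticAt_realGamma (hx : ∀ m : ℕ, x ≠ -m) : AnalyticAt ℝ Real.Gamma x :=
  (analyticAt_complexGamma fun m ↦ mod_cast hx m).re_ofReal

lemma analyticAt_log_Gamma (hx : ∀ m : ℕ, x ≠ -m) :
    AnalyticAt ℝ (fun y ↦ Real.log (Real.Gamma y)) x :=
  ((analyticAt_realGamma hx).contDiffAt.log (Real.Gamma_ne_zero hx)).analyticAt

lemma hasDerivAt_log_Gamma (hx : ∀ m : ℕ, x ≠ -m) :
    HasDerivAt (fun y ↦ Real.log (Real.Gamma y)) (digamma x) x :=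
  (analyticAt_log_Gamma hx).differentiableAt.hasDerivAt

lemma hasDerivAt_digamma (hx : ∀ m : ℕ, x ≠ -m) : HasDerivAt digamma (trigamma x) x := by
  rw [trigamma, iteratedDeriv_succ, iteratedDeriv_one]
  exact (analyticAt_log_Gamma hx).deriv.differentiableAt.hasDerivAt

end Digamma

section BetaIntegral

lemma beta_half_add_half_sub (s t : ℝ) :
    beta ((s + t) / 2) ((s - t) / 2) =
      Real.Gamma ((s + t) / 2) * Real.Gamma ((s - t) / 2) / Real.Gamma s := by
  rw [beta, ← add_div, add_add_sub_cancel, add_self_div_two]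

lemma integral_Ioo_rpow_mul_one_sub_rpow {a b : ℝ} (ha : 0 < a) (hb : 0 < b) :
    ∫ x in Ioo (0 : ℝ) 1, x ^ (a - 1) * (1 - x) ^ (b - 1) = beta a b := by
  have h_ofReal : ∀ x ∈ Ioo (0 : ℝ) 1, (x : ℂ) ^ ((a : ℂ) - 1) * (1 - (x : ℂ)) ^ ((b : ℂ) - 1) =
      ((x ^ (a - 1) * (1 - x) ^ (b - 1) : ℝ) : ℂ) := by
    intro x hx
    rw [Complex.ofReal_mul, Complex.ofReal_cpow hx.1.le, Complex.ofReal_cpow (sub_pos.2 hx.2).le]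
    push_cast
    rfl
  rw [beta_eq_betaIntegralReal a b ha hb, Complex.betaIntegral,
    intervalIntegral.integral_of_le zero_le_one, integral_Ioc_eq_integral_Ioo,
    setIntegral_congr_fun measurableSet_Ioo h_ofReal, integral_complex_ofReal, Complex.ofReal_re]

lemma integral_comp_sigmoid {E : Type*} [NormedAddCommGroup E] [NormedSpace ℝ E] (f : ℝ → E) :
    ∫ x, (Real.sigmoid x * Real.sigmoid (-x)) • f (Real.sigmoid x) = ∫ y in Ioo 0 1, f y := by
  have h := integral_image_eq_integral_deriv_smul_of_monotoneOn MeasurableSet.univ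
    (fun x _ ↦ (Real.hasDerivAt_sigmoid x).hasDerivWithinAt) (Real.sigmoid_monotone.monotoneOn _) f
  simpa only [image_univ, Real.range_sigmoid, Measure.restrict_univ, ← Real.sigmoid_neg]
    using h.symm

lemma integral_sigmoid_rpow_mul_sigmoid_neg_rpow {a b : ℝ} (ha : 0 < a) (hb : 0 < b) :
    ∫ x, Real.sigmoid x ^ a * Real.sigmoid (-x) ^ b = beta a b := by
  rw [← integral_Ioo_rpow_mul_one_sub_rpow ha hb, ← integral_comp_sigmoid]
  refine integral_congr_ae (.of_forall fun x ↦ ?_)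
  simp only [← Real.sigmoid_neg, Real.rpow_sub_one (Real.sigmoid_pos _).ne', smul_eq_mul]
  have := Real.sigmoid_pos x
  have := Real.sigmoid_pos (-x)
  field_simp

end BetaIntegral

section Sech

lemma sech_pos (x : ℝ) : 0 < sech x := one_div_pos.2 (Real.cosh_pos x)

lemma sech_neg (x : ℝ) : sech (-x) = sech x := by rw [sech, sech, Real.cosh_neg]

@[fun_prop]
lemma measurable_sech : Measurable sech := by
  unfold sech
  fun_prop

lemma sigmoid_two_mul (x : ℝ) : Real.sigmoid (2 * x) = Real.exp x * sech x / 2 := by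
  have h_exp : Real.exp (-(2 * x)) = Real.exp (-x) * Real.exp (-x) := by
    rw [← Real.exp_add]
    ring_nf
  rw [Real.sigmoid_def, sech, Real.cosh_eq, h_exp, Real.exp_neg]
  field_simp

lemma sech_rpow_mul_exp (s t x : ℝ) :
    sech x ^ s * Real.exp (t * x) =
      2 ^ s * (Real.sigmoid (2 * x) ^ ((s + t) / 2) * Real.sigmoid (-(2 * x)) ^ ((s - t) / 2)) := by
  have h_sech := sech_pos x
  have h_rpow : sech x ^ ((s + t) / 2) * sech x ^ ((s - t) / 2) = sech x ^ s := by
    rw [← Real.rpow_add h_sech]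
    ring_nf
  have h_two : (2 : ℝ) ^ ((s + t) / 2) * 2 ^ ((s - t) / 2) = 2 ^ s := by
    rw [← Real.rpow_add two_pos]
    ring_nf
  have h_exp : Real.exp (x * ((s + t) / 2)) * Real.exp (-x * ((s - t) / 2)) =
      Real.exp (t * x) := by
    rw [← Real.exp_add]
    ring_nf
  rw [← mul_neg, sigmoid_two_mul, sigmoid_two_mul, sech_neg,
    Real.div_rpow (by positivity) zero_le_two, Real.div_rpow (by positivity) zero_le_two,
    Real.mul_rpow (by positivity) h_sech.le, Real.mul_rpow (by positivity) h_sech.le,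
    ← Real.exp_mul, ← Real.exp_mul, ← h_rpow, ← h_two, ← h_exp]
  field_simp

lemma integral_sech_rpow_mul_exp {s t : ℝ} (ht : t ∈ Ioo (-s) s) :
    ∫ x, sech x ^ s * Real.exp (t * x) = 2 ^ (s - 1) * beta ((s + t) / 2) ((s - t) / 2) := by
  have ha : 0 < (s + t) / 2 := by linarith [ht.1]
  have hb : 0 < (s - t) / 2 := by linarith [ht.2]
  simp_rw [sech_rpow_mul_exp]
  rw [integral_const_mul, Measure.integral_comp_mul_left
      (fun y ↦ Real.sigmoid y ^ ((s + t) / 2) * Real.sigmoid (-y) ^ ((s - t) / 2)) 2,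
    integral_sigmoid_rpow_mul_sigmoid_neg_rpow ha hb, Real.rpow_sub_one two_ne_zero,
    abs_of_pos (by positivity), smul_eq_mul]
  ring

end Sech

/-- The measure `sech(x)ˢ dx` on `ℝ`, the base measure of the beta-logistic family seen, for fixed
`θ¹ = s`, as an exponential family in `θ²`. -/
noncomputable def sechMeasure (s : ℝ) : Measure ℝ :=
  volume.withDensity fun x ↦ ENNReal.ofReal (sech x ^ s)

section SechMeasure

variable {E : Type*} [NormedAddCommGroup E] [NormedSpace ℝ E] {s t : ℝ}

lemma integral_sechMeasure (s : ℝ) (g : ℝ → E) :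
    ∫ x, g x ∂(sechMeasure s) = ∫ x, sech x ^ s • g x := by
  rw [sechMeasure, integral_withDensity_eq_integral_toReal_smul (by fun_prop)
    (.of_forall fun _ ↦ ENNReal.ofReal_lt_top)]
  simp only [ENNReal.toReal_ofReal (Real.rpow_nonneg (sech_pos _).le s)]

lemma mgf_sechMeasure (ht : t ∈ Ioo (-s) s) :
    mgf id (sechMeasure s) t = 2 ^ (s - 1) * beta ((s + t) / 2) ((s - t) / 2) := by
  simp only [← integral_sech_rpow_mul_exp ht, mgf, integral_sechMeasure, smul_eq_mul, id]

lemma mgf_sechMeasure_pos (ht : t ∈ Ioo (-s) s) : 0 < mgf id (sechMeasure s) t := by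
  rw [mgf_sechMeasure ht]
  exact mul_pos (by positivity) (beta_pos (by linarith [ht.1]) (by linarith [ht.2]))

lemma Ioo_subset_interior_integrableExpSet_sechMeasure (s : ℝ) :
    Ioo (-s) s ⊆ interior (integrableExpSet id (sechMeasure s)) :=
  interior_maximal (fun _ ht ↦ Integrable.of_integral_ne_zero (mgf_sechMeasure_pos ht).ne')
    isOpen_Ioo

lemma cgf_sechMeasure (ht : t ∈ Ioo (-s) s) :
    cgf id (sechMeasure s) t = Real.log (2 ^ (s - 1)) + (Real.log (Real.Gamma ((s + t) / 2)) +
      Real.log (Real.Gamma ((s - t) / 2)) - Real.log (Real.Gamma s)) := by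
  have ha : 0 < Real.Gamma ((s + t) / 2) := Real.Gamma_pos_of_pos (by linarith [ht.1])
  have hb : 0 < Real.Gamma ((s - t) / 2) := Real.Gamma_pos_of_pos (by linarith [ht.2])
  have hs : 0 < Real.Gamma s := Real.Gamma_pos_of_pos (by linarith [ht.1, ht.2])
  rw [cgf, mgf_sechMeasure ht, beta_half_add_half_sub, Real.log_mul (by positivity) (by positivity),
    Real.log_div (by positivity) hs.ne', Real.log_mul ha.ne' hb.ne']

lemma hasDerivAt_add_div_two (s t : ℝ) : HasDerivAt (fun u ↦ (s + u) / 2) (1 / 2) t :=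
  ((hasDerivAt_id t).const_add s).div_const 2

lemma hasDerivAt_sub_div_two (s t : ℝ) : HasDerivAt (fun u ↦ (s - u) / 2) (-1 / 2) t :=
  ((hasDerivAt_id t).const_sub s).div_const 2

lemma hasDerivAt_cgf_sechMeasure (ht : t ∈ Ioo (-s) s) :
    HasDerivAt (cgf id (sechMeasure s))
      (1 / 2 * (digamma ((s + t) / 2) - digamma ((s - t) / 2))) t := by
  have ha : ∀ m : ℕ, (s + t) / 2 ≠ -m := by bound [ht.1]
  have hb : ∀ m : ℕ, (s - t) / 2 ≠ -m := by bound [ht.2]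
  have h_add := (hasDerivAt_log_Gamma ha).comp t (hasDerivAt_add_div_two s t)
  have h_sub := (hasDerivAt_log_Gamma hb).comp t (hasDerivAt_sub_div_two s t)
  have h_formula := ((h_add.add h_sub).sub_const (Real.log (Real.Gamma s))).const_add
    (Real.log (2 ^ (s - 1)))
  have h_eq := Filter.eventually_of_mem (isOpen_Ioo.mem_nhds ht) fun _ ↦ cgf_sechMeasure (s := s)
  exact (h_formula.congr_of_eventuallyEq h_eq).congr_deriv (by ring)

lemma iteratedDeriv_two_cgf_sechMeasure (ht : t ∈ Ioo (-s) s) :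
    iteratedDeriv 2 (cgf id (sechMeasure s)) t =
      1 / 4 * (trigamma ((s + t) / 2) + trigamma ((s - t) / 2)) := by
  have ha : ∀ m : ℕ, (s + t) / 2 ≠ -m := by bound [ht.1]
  have hb : ∀ m : ℕ, (s - t) / 2 ≠ -m := by bound [ht.2]
  have h_add := (hasDerivAt_digamma ha).comp t (hasDerivAt_add_div_two s t)
  have h_sub := (hasDerivAt_digamma hb).comp t (hasDerivAt_sub_div_two s t)
  have h_formula := (h_add.sub h_sub).const_mul (1 / 2)
  have h_eq := Filter.eventually_of_mem (isOpen_Ioo.mem_nhds ht) fun _ hu ↦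
    (hasDerivAt_cgf_sechMeasure (s := s) hu).deriv
  rw [iteratedDeriv_succ, iteratedDeriv_one, (h_formula.congr_of_eventuallyEq h_eq).deriv]
  ring

lemma betaLogisticPDF_eq_sech_rpow_mul (ht : t ∈ Ioo (-s) s) (x : ℝ) :
    betaLogisticPDF s t x = sech x ^ s * (Real.exp (t * x) / mgf id (sechMeasure s) t) := by
  have h_two : (2 : ℝ) ^ (1 - s) = (2 ^ (s - 1))⁻¹ := by rw [← Real.rpow_neg zero_le_two, neg_sub]
  rw [betaLogisticPDF, mgf_sechMeasure ht, beta_half_add_half_sub, h_two,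
    mul_comm (Real.Gamma ((s - t) / 2))]
  field_simp

lemma integral_betaLogisticPDF_smul (ht : t ∈ Ioo (-s) s) (g : ℝ → E) :
    ∫ x, betaLogisticPDF s t x • g x = ∫ x, g x ∂(sechMeasure s).tilted (t * id ·) := by
  rw [integral_tilted_mul_eq_mgf, integral_sechMeasure]
  simp only [betaLogisticPDF_eq_sech_rpow_mul ht, smul_smul, id]

end SechMeasure

/-- The variance of the beta-logistic distribution is
`(1/4)(ψ'((θ¹+θ²)/2) + ψ'((θ¹−θ²)/2))`, where the mean is
`μ = (1/2)(ψ((θ¹+θ²)/2) − ψ((θ¹−θ²)/2))`.  This is the Fisher metric entry `g₂₂`. -/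
theorem betaLogistic_variance (θ1 θ2 μ : ℝ) (h1 : 0 < θ1 + θ2) (h2 : 0 < θ1 - θ2)
    (hμ : μ = (1 / 2) * (digamma ((θ1 + θ2) / 2) - digamma ((θ1 - θ2) / 2))) :
    (∫ x : ℝ, (x - μ) ^ 2 * betaLogisticPDF θ1 θ2 x) =
      (1 / 4) * (trigamma ((θ1 + θ2) / 2) + trigamma ((θ1 - θ2) / 2)) := by
  have hθ : θ2 ∈ Ioo (-θ1) θ1 := ⟨by linarith, by linarith⟩
  have h_int := Ioo_subset_interior_integrableExpSet_sechMeasure θ1 hθ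
  have h_mean : ((sechMeasure θ1).tilted (θ2 * id ·))[id] = μ := by
    rw [integral_tilted_mul_self h_int, (hasDerivAt_cgf_sechMeasure hθ).deriv, hμ]
  calc ∫ x, (x - μ) ^ 2 * betaLogisticPDF θ1 θ2 x
    _ = ∫ x, (x - μ) ^ 2 ∂(sechMeasure θ1).tilted (θ2 * id ·) := by
      simp_rw [← integral_betaLogisticPDF_smul hθ, smul_eq_mul, mul_comm]
    _ = Var[id; (sechMeasure θ1).tilted (θ2 * id ·)] := by
      rw [variance_eq_integral aemeasurable_id, h_mean]
      rfl
    _ = iteratedDeriv 2 (cgf id (sechMeasure θ1)) θ2 := variance_tilted_mul h_int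
    _ = 1 / 4 * (trigamma ((θ1 + θ2) / 2) + trigamma ((θ1 - θ2) / 2)) :=
      iteratedDeriv_two_cgf_sechMeasure hθ
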